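/- There exist universal constants B > 0 and C > 0 such that the following holds. Let n ≥ 2 and let G be a finite graph on vertex set V = {1,…,n} given by a finite edge-index set E together with endpoint maps assigning to each e ∈ E an unordered pair of distinct vertices (parallel edges allowed); let L_e denote the Laplacian of the single edge e and L_G = Σ_{e∈E} L_e. Let s : V → ℕ and let D be the diagonal matrix with D_vv = deg(v) + s_v, where deg(v) counts edges of E incident to v with multiplicity; assume D_vv > 0 for all v, let d_min = min_v D_vv, and let λ > 0 be the second-smallest eigenvalue of D^{−1/2} L_G D^{−1/2}. Let m₁, m₂ ∈ ℕ, let Δ ≥ 1, and let e ↦ (c₁(e), c₂(e)) ∈ [m₁]×[m₂] be an injective map such that for every i ∈ [m₁] each vertex is incident to at most Δ edges e with c₁(e) = i, and for every j ∈ [m₂] each vertex is incident to at most Δ edges e with c₂(e) = j. Let η ∈ [0,1/2) and let ξ¹₁,…,ξ¹_{m₁}, ξ²₁,…,ξ²_{m₂} be independent random signs, each equal to −1 with probability η and +1 otherwise. Let H = {e ∈ E : ξ¹_{c₁(e)}·ξ²_{c₂(e)} = −1} and L_H = Σ_{e∈H} L_e. If d_min·λ ≥ B·Δ·log n, then with probability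 at least 1 − C/n², L_H ⪯ max((1+δ)·2η(1−η), 1/3)·L_G, where δ = sqrt(B·Δ·log n/(d_min·λ)). -/

import Mathlib

open Finset Matrix
open scoped Classical

/-- The Laplacian of the single edge `{a,b}`: `(χ_a − χ_b)(χ_a − χ_b)ᵀ`. -/
noncomputable def edgeLapV {V : Type} [DecidableEq V] (a b : V) : Matrix V V ℝ :=
  Matrix.of fun i j =>
    ((if i = a then (1 : ℝ) else 0) - (if i = b then 1 else 0)) *
      ((if j = a then (1 : ℝ) else 0) - (if j = b then 1 else 0))

/-- The value of a random sign: `true` encodes `−1`, `false` encodes `+1`. -/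
noncomputable def sgn (b : Bool) : ℝ := if b then -1 else 1

/-!
The moment method: a matrix `X` fails `X ≤ τ` only if `tr (1 + X) ^ q ≥ (1 + τ) ^ q`, with `q` of
order `log n / δ`. Factoring `A = Tᵀ T`, the Lieb–Thirring inequality (elementary when `q` is a
power of two) bounds the effect on `tr A ^ q` of adding a random positive semidefinite `Y ≤ R • A`
by its first-order term up to a factor `1 + q R`, and Klein's inequality turns this term back into
a trace power. So, in the moment of a sum of independent positive semidefinite matrices, each
summand may be replaced by `1 + q R` times its mean.

Freeze the signs of the second colouring: `L_H` is then a sum of independent matrices indexed by the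
first colours. Replacing them by their means leaves a sum of independent matrices indexed by the
second colours, and the same bound applies again. All matrices are compared with `L_G` grounded by
a rank-one term that does not affect the conclusion, and the spectral gap bounds the Laplacian of
each colour class by `2 Δ / (d_min λ)` times `L_G`.
-/

open scoped MatrixOrder

section SpectralExpansion

variable {ι : Type*} [Fintype ι] [DecidableEq ι] {A B : Matrix ι ι ℝ}

lemma hermitian_pow_eq (hA : A.IsHermitian) (k : ℕ) :
    A ^ k = (hA.eigenvectorUnitary : Matrix ι ι ℝ) * diagonal (hA.eigenvalues ^ k) *
      star (hA.eigenvectorUnitary : Matrix ι ι ℝ) := by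
  conv_lhs => rw [hA.spectral_theorem]
  rw [← map_pow, Unitary.conjStarAlgAut_apply, diagonal_pow]
  rfl

lemma trace_pow_eq_sum_eigenvalues_pow (hA : A.IsHermitian) (k : ℕ) :
    (A ^ k).trace = ∑ i, hA.eigenvalues i ^ k := by
  rw [hermitian_pow_eq hA, trace_mul_comm, ← Matrix.mul_assoc, Unitary.coe_star_mul_self,
    Matrix.one_mul, trace_diagonal]
  rfl

/-- The squared inner product of the `i`-th eigenvector of `A` and the `j`-th eigenvector of `B`:
the joint spectral weights of a pair of symmetric matrices that need not commute. -/
noncomputable def spectralOverlap (hA : A.IsHermitian) (hB : B.IsHermitian) (i j : ι) : ℝ :=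
  ((star (hA.eigenvectorUnitary : Matrix ι ι ℝ) * hB.eigenvectorUnitary) i j) ^ 2

lemma spectralOverlap_nonneg (hA : A.IsHermitian) (hB : B.IsHermitian) (i j : ι) :
    0 ≤ spectralOverlap hA hB i j :=
  sq_nonneg _

lemma trace_pow_mul_pow_eq_sum (hA : A.IsHermitian) (hB : B.IsHermitian) (k l : ℕ) :
    (A ^ k * B ^ l).trace =
      ∑ i, ∑ j, spectralOverlap hA hB i j * (hA.eigenvalues i ^ k * hB.eigenvalues j ^ l) := by
  set U : Matrix ι ι ℝ := (hA.eigenvectorUnitary : Matrix ι ι ℝ) with hU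
  set W : Matrix ι ι ℝ := (hB.eigenvectorUnitary : Matrix ι ι ℝ) with hW
  have hcycle : (A ^ k * B ^ l).trace = (diagonal (hA.eigenvalues ^ k) * (star U * W) *
      (diagonal (hB.eigenvalues ^ l) * star (star U * W))).trace := by
    rw [hermitian_pow_eq hA, hermitian_pow_eq hB, ← hU, ← hW, star_mul, star_star]
    simp only [Matrix.mul_assoc]
    rw [trace_mul_comm]
    simp only [Matrix.mul_assoc]
  rw [hcycle, trace]
  refine sum_congr rfl fun i _ => ?_
  rw [diag_apply, Matrix.mul_apply]
  refine sum_congr rfl fun j _ => ?_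
  rw [diagonal_mul, diagonal_mul, star_apply, star_trivial ((star U * W) i j), spectralOverlap,
    Pi.pow_apply, Pi.pow_apply]
  ring

lemma le_smul_one_iff_eigenvalues_le (hA : A.IsHermitian) (c : ℝ) :
    A ≤ c • 1 ↔ ∀ i, hA.eigenvalues i ≤ c := by
  rw [← Algebra.algebraMap_eq_smul_one, le_algebraMap_iff_spectrum_le (ha := hA),
    hA.spectrum_real_eq_range_eigenvalues, Set.forall_mem_range]

lemma pow_le_trace_pow_of_not_le_smul_one (hA : 0 ≤ A) {c : ℝ} (hc : 0 ≤ c) (h : ¬ A ≤ c • 1)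
    (q : ℕ) : c ^ q ≤ (A ^ q).trace := by
  have hA' := hA.posSemidef
  rw [le_smul_one_iff_eigenvalues_le hA'.1] at h
  push Not at h
  obtain ⟨i, hi⟩ := h
  rw [trace_pow_eq_sum_eigenvalues_pow hA'.1]
  calc c ^ q ≤ hA'.1.eigenvalues i ^ q := pow_le_pow_left₀ hc hi.le q
    _ ≤ ∑ i, hA'.1.eigenvalues i ^ q :=
      single_le_sum (fun i _ => pow_nonneg (hA'.eigenvalues_nonneg i) q) (mem_univ i)

lemma trace_pow_le_card_mul_pow (hA : 0 ≤ A) {c : ℝ} (h : A ≤ c • 1) (q : ℕ) :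
    (A ^ q).trace ≤ Fintype.card ι * c ^ q := by
  have hA' := hA.posSemidef
  rw [trace_pow_eq_sum_eigenvalues_pow hA'.1, ← nsmul_eq_mul, ← card_univ]
  exact sum_le_card_nsmul _ _ _ fun i _ => pow_le_pow_left₀ (hA'.eigenvalues_nonneg i)
    ((le_smul_one_iff_eigenvalues_le hA'.1 c).1 h i) q

end SpectralExpansion

section TraceInequalities

variable {ι : Type*} [Fintype ι] {A B P X Y : Matrix ι ι ℝ}

lemma pow_add_mul_sub_le_pow {x y : ℝ} (hx : 0 ≤ x) (hy : 0 ≤ y) (q : ℕ) :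
    x ^ q + q * (x ^ (q - 1) * y - x ^ q) ≤ y ^ q := by
  rcases q with _ | q
  · simp
  rw [Nat.add_sub_cancel]
  induction q with
  | zero => simp
  | succ q ih =>
    have hsq : 0 ≤ (q + 1) * x ^ q * (x - y) ^ 2 := by positivity
    have hmul := mul_le_mul_of_nonneg_right ih hy
    push_cast at hmul ⊢
    ring_nf at hsq hmul ⊢
    linarith

lemma trace_mul_nonneg (hA : 0 ≤ A) (hB : 0 ≤ B) : 0 ≤ (A * B).trace := by
  obtain ⟨S, rfl⟩ := CStarAlgebra.nonneg_iff_eq_star_mul_self.1 hA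
  rw [Matrix.mul_assoc, trace_mul_comm]
  exact (star_right_conjugate_nonneg hB S).posSemidef.trace_nonneg

lemma trace_mul_le_trace_mul (hP : 0 ≤ P) (h : X ≤ Y) : (P * X).trace ≤ (P * Y).trace := by
  rw [← sub_nonneg, ← trace_sub, ← Matrix.mul_sub]
  exact trace_mul_nonneg hP (sub_nonneg.2 h)

lemma trace_mul_le_half_add (A B : Matrix ι ι ℝ) :
    (A * B).trace ≤ ((A * star A).trace + (star B * B).trace) / 2 := by
  have h : 0 ≤ ((A - star B) * star (A - star B)).trace :=
    (posSemidef_self_mul_conjTranspose _).trace_nonneg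
  have hBA : (star B * star A).trace = (A * B).trace := by
    rw [← star_mul, star_eq_conjTranspose, trace_conjTranspose, star_trivial]
  rw [star_sub, star_star, Matrix.sub_mul, Matrix.mul_sub, Matrix.mul_sub, trace_sub, trace_sub,
    trace_sub, hBA] at h
  linarith

variable [DecidableEq ι]

lemma trace_mul_le_half_add_sq (hA : A.IsHermitian) (hB : B.IsHermitian) :
    (A * B).trace ≤ ((A ^ 2).trace + (B ^ 2).trace) / 2 := by
  have h := trace_mul_le_half_add A B
  rwa [hA.isSelfAdjoint.star_eq, hB.isSelfAdjoint.star_eq, ← pow_two, ← pow_two] at h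

/-- Klein's inequality for powers: the tangent of the convex function `tr (A ^ q)` lies below it. -/
lemma trace_pow_add_mul_trace_le (hA : 0 ≤ A) (hB : 0 ≤ B) (q : ℕ) :
    (A ^ q).trace + q * ((A ^ (q - 1) * B).trace - (A ^ q).trace) ≤ (B ^ q).trace := by
  have hA' := hA.posSemidef
  have hB' := hB.posSemidef
  have hexp := trace_pow_mul_pow_eq_sum hA'.1 hB'.1
  have hAq := hexp q 0
  have hBq := hexp 0 q
  have hAB := hexp (q - 1) 1
  rw [pow_zero, Matrix.mul_one] at hAq
  rw [pow_zero, Matrix.one_mul] at hBq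
  rw [pow_one] at hAB
  rw [hAq, hBq, hAB]
  simp only [mul_sum, ← sum_sub_distrib, ← sum_add_distrib]
  refine sum_le_sum fun i _ => sum_le_sum fun j _ => ?_
  have hij := mul_le_mul_of_nonneg_left (pow_add_mul_sub_le_pow (hA'.eigenvalues_nonneg i)
    (hB'.eigenvalues_nonneg j) q) (spectralOverlap_nonneg hA'.1 hB'.1 i j)
  linarith

lemma trace_mul_pow_comm {𝕜 : Type*} [CommSemiring 𝕜] (A B : Matrix ι ι 𝕜) (m : ℕ) :
    ((A * B) ^ m).trace = ((B * A) ^ m).trace := by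
  rcases m with _ | m
  · simp
  · rw [pow_succ, ← Matrix.mul_assoc, mul_pow_mul, Matrix.mul_assoc, trace_mul_comm,
      Matrix.mul_assoc, ← pow_succ]

/-- The one-matrix bound carries the induction for the two-matrix one, and conversely: squaring
`M` turns `M * star M` into a product of the two symmetric matrices `M * star M` and
`star M * M`. -/
lemma lieb_thirring_pow_two (k : ℕ) :
    (∀ M : Matrix ι ι ℝ, (M ^ (2 * 2 ^ k)).trace ≤ ((M * star M) ^ 2 ^ k).trace) ∧
    ∀ A B : Matrix ι ι ℝ, A.IsHermitian → B.IsHermitian →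
      ((A * B) ^ 2 ^ k).trace ≤ (A ^ 2 ^ k * B ^ 2 ^ k).trace := by
  induction k with
  | zero =>
    refine ⟨fun M => ?_, fun A B _ _ => by simp⟩
    have h := trace_mul_le_half_add M M
    rw [trace_mul_comm (star M) M] at h
    simpa [pow_two] using h
  | succ k ih =>
    obtain ⟨ihOne, ihTwo⟩ := ih
    have hpow (M : Matrix ι ι ℝ) : M ^ 2 ^ (k + 1) = (M * M) ^ 2 ^ k := by
      rw [← pow_two, ← pow_mul, ← pow_succ']
    constructor
    · intro M
      calc (M ^ (2 * 2 ^ (k + 1))).trace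
          = ((M * M) ^ (2 * 2 ^ k)).trace := by rw [← pow_two M, ← pow_mul, pow_succ' 2 k]
        _ ≤ ((M * M * star (M * M)) ^ 2 ^ k).trace := ihOne _
        _ = ((M * star M * (star M * M)) ^ 2 ^ k).trace := by
          rw [star_mul, Matrix.mul_assoc, trace_mul_pow_comm]
          simp only [Matrix.mul_assoc]
        _ ≤ ((M * star M) ^ 2 ^ k * (star M * M) ^ 2 ^ k).trace :=
          ihTwo _ _ (isHermitian_mul_conjTranspose_self _) (isHermitian_conjTranspose_mul_self _)
        _ ≤ (((M * star M) ^ 2 ^ (k + 1)).trace + ((star M * M) ^ 2 ^ (k + 1)).trace) / 2 := by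
          rw [pow_succ, pow_mul, pow_mul]
          exact trace_mul_le_half_add_sq ((isHermitian_mul_conjTranspose_self M).pow _)
            ((isHermitian_conjTranspose_mul_self M).pow _)
        _ = ((M * star M) ^ 2 ^ (k + 1)).trace := by
          rw [trace_mul_pow_comm (star M) M, add_self_div_two]
    · intro A B hA hB
      calc ((A * B) ^ 2 ^ (k + 1)).trace
          ≤ ((A * B * star (A * B)) ^ 2 ^ k).trace := pow_succ' 2 k ▸ ihOne _
        _ = ((A * A * (B * B)) ^ 2 ^ k).trace := by
          rw [star_mul, hA.isSelfAdjoint.star_eq, hB.isSelfAdjoint.star_eq, Matrix.mul_assoc,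
            trace_mul_pow_comm, trace_mul_pow_comm (A * A)]
          simp only [Matrix.mul_assoc]
        _ ≤ ((A * A) ^ 2 ^ k * (B * B) ^ 2 ^ k).trace := by
          refine ihTwo _ _ ?_ ?_
          · simpa only [pow_two] using hA.pow 2
          · simpa only [pow_two] using hB.pow 2
        _ = (A ^ 2 ^ (k + 1) * B ^ 2 ^ (k + 1)).trace := by rw [hpow, hpow]

lemma lieb_thirring (hA : A.IsHermitian) (hB : B.IsHermitian) (k : ℕ) :
    ((A * B) ^ 2 ^ k).trace ≤ (A ^ 2 ^ k * B ^ 2 ^ k).trace :=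
  (lieb_thirring_pow_two k).2 A B hA hB

lemma one_add_pow_le {q : ℕ} {y R : ℝ} (hy : 0 ≤ y) (hyR : y ≤ R) (hqR : q * R ≤ 1) :
    (1 + y) ^ q ≤ 1 + (1 + q * R) * q * y := by
  have hqy : q * y ≤ q * R := mul_le_mul_of_nonneg_left hyR (Nat.cast_nonneg q)
  have hqy0 : 0 ≤ q * y := by positivity
  have hexp : (1 + y) ^ q ≤ Real.exp (q * y) := by
    rw [Real.exp_nat_mul]
    exact pow_le_pow_left₀ (by linarith) (by linarith [Real.add_one_le_exp y]) q
  have hquad := (abs_le.1 (Real.abs_exp_sub_one_sub_id_le (x := q * y)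
    (by rw [abs_of_nonneg hqy0]; linarith))).2
  nlinarith

lemma matrix_one_add_pow_le {q : ℕ} {R : ℝ} (hY : 0 ≤ Y) (hYR : Y ≤ R • 1) (hqR : q * R ≤ 1) :
    (1 + Y) ^ q ≤ 1 + ((1 + q * R) * q) • Y := by
  have hYs : IsSelfAdjoint Y := hY.isSelfAdjoint
  have hl : cfc (fun y : ℝ => (1 + y) ^ q) Y = (1 + Y) ^ q := by
    rw [cfc_pow _ _ Y, cfc_const_add 1 _ Y, cfc_id' ℝ Y, map_one]
  have hr : cfc (fun y : ℝ => 1 + (1 + q * R) * q * y) Y = 1 + ((1 + q * R) * q) • Y := by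
    rw [cfc_const_add 1 _ Y, cfc_const_mul _ _ Y, cfc_id' ℝ Y, map_one]
  rw [← hl, ← hr]
  rw [← Algebra.algebraMap_eq_smul_one, le_algebraMap_iff_spectrum_le] at hYR
  exact cfc_mono fun y hy => one_add_pow_le (spectrum_nonneg_of_nonneg hY hy) (hYR y hy) hqR

/-- Factoring `A = star T * T` reduces to perturbations of the identity, at the price of the
Lieb–Thirring inequality. -/
lemma trace_pow_add_le (hA : A.PosDef) (hX : 0 ≤ X) {R : ℝ} (hXR : X ≤ R • A) {k q : ℕ}
    (hq : q = 2 ^ k) (hqR : q * R ≤ 1) :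
    ((A + X) ^ q).trace ≤ (A ^ q).trace + (1 + q * R) * q * (A ^ (q - 1) * X).trace := by
  obtain ⟨T, hT, hAT⟩ :=
    CStarAlgebra.isStrictlyPositive_iff_eq_star_mul_self.1 hA.isStrictlyPositive
  obtain ⟨Y, rfl⟩ : ∃ Y, star T * Y * T = X := by
    obtain ⟨S, hST⟩ := hT.exists_left_inv
    have hTS : star T * star S = 1 := by rw [← star_mul, hST, star_one]
    refine ⟨star S * X * S, ?_⟩
    calc star T * (star S * X * S) * T = star T * star S * X * (S * T) := by noncomm_ring
      _ = X := by rw [hTS, hST, Matrix.one_mul, Matrix.mul_one]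
  have hY : 0 ≤ Y := hT.star_left_conjugate_nonneg_iff.1 hX
  have hYR : Y ≤ R • 1 := by
    rw [← sub_nonneg, ← hT.star_left_conjugate_nonneg_iff]
    simpa [mul_sub, sub_mul, hAT] using hXR
  have hTT : 0 ≤ T * star T := mul_star_self_nonneg T
  have hTTq : (T * star T) ^ q = T * A ^ (q - 1) * star T := by
    rw [hAT, ← mul_pow_mul, Matrix.mul_assoc, ← pow_succ, hq,
      Nat.sub_add_cancel Nat.one_le_two_pow]
  calc ((A + star T * Y * T) ^ q).trace
      = ((T * star T * (1 + Y)) ^ q).trace := by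
        rw [trace_mul_pow_comm _ (1 + Y), ← Matrix.mul_assoc, trace_mul_pow_comm _ (star T), hAT]
        noncomm_ring
    _ ≤ ((T * star T) ^ q * (1 + Y) ^ q).trace :=
      hq ▸ lieb_thirring hTT.posSemidef.1 (add_nonneg zero_le_one hY).posSemidef.1 k
    _ ≤ ((T * star T) ^ q * (1 + ((1 + q * R) * q) • Y)).trace :=
      trace_mul_le_trace_mul (hTT.posSemidef.pow q).nonneg (matrix_one_add_pow_le hY hYR hqR)
    _ = (A ^ q).trace + (1 + q * R) * q * (A ^ (q - 1) * (star T * Y * T)).trace := by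
        rw [Matrix.mul_add, Matrix.mul_one, trace_add, trace_mul_pow_comm, ← hAT, Matrix.mul_smul,
          trace_smul, smul_eq_mul, hTTq, Matrix.mul_assoc, Matrix.mul_assoc, trace_mul_comm]
        simp only [Matrix.mul_assoc]

end TraceInequalities

section MatrixChernoff

variable {ι κ α : Type*} [Fintype ι] [DecidableEq ι] [Fintype κ] [DecidableEq κ] [Fintype α]
  {w : α → ℝ} {R : ℝ} {k q : ℕ}

lemma sum_mul_trace_pow_add_le {A : Matrix ι ι ℝ} (hA : A.PosDef) {X : α → Matrix ι ι ℝ}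
    (hX : ∀ b, 0 ≤ X b) (hXR : ∀ b, X b ≤ R • A) (hR : 0 ≤ R) (hw : ∀ b, 0 ≤ w b)
    (hw1 : ∑ b, w b = 1) (hq : q = 2 ^ k) (hqR : q * R ≤ 1) :
    ∑ b, w b * ((A + X b) ^ q).trace ≤ ((A + (1 + q * R) • ∑ b, w b • X b) ^ q).trace := by
  have hA0 : 0 ≤ A := hA.posSemidef.nonneg
  have hmean : 0 ≤ ∑ b, w b • X b := sum_nonneg fun b _ => smul_nonneg (hw b) (hX b)
  have hgrad : (A ^ (q - 1) * A).trace = (A ^ q).trace := by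
    rw [← pow_succ, hq, Nat.sub_add_cancel Nat.one_le_two_pow]
  calc ∑ b, w b * ((A + X b) ^ q).trace
      ≤ ∑ b, w b * ((A ^ q).trace + (1 + q * R) * q * (A ^ (q - 1) * X b).trace) :=
        sum_le_sum fun b _ => mul_le_mul_of_nonneg_left
          (trace_pow_add_le hA (hX b) (hXR b) hq hqR) (hw b)
    _ = (A ^ q).trace + q * (A ^ (q - 1) * ((1 + q * R) • ∑ b, w b • X b)).trace := by
        simp only [mul_add, sum_add_distrib, ← sum_mul, hw1, one_mul, Matrix.mul_smul,
          trace_smul, trace_sum, smul_eq_mul, mul_sum]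
        congr 1
        exact sum_congr rfl fun b _ => by ring
    _ = (A ^ q).trace + q * ((A ^ (q - 1) * (A + (1 + q * R) • ∑ b, w b • X b)).trace
          - (A ^ q).trace) := by
        rw [Matrix.mul_add, trace_add, hgrad, add_sub_cancel_left]
    _ ≤ ((A + (1 + q * R) • ∑ b, w b • X b) ^ q).trace :=
        trace_pow_add_mul_trace_le hA0
          (add_nonneg hA0 (smul_nonneg (by positivity) hmean)) q

lemma matrix_chernoff_moment_fin (hR : 0 ≤ R) (hw : ∀ b, 0 ≤ w b) (hw1 : ∑ b, w b = 1)
    (hq : q = 2 ^ k) (hqR : q * R ≤ 1) {m : ℕ} {A : Matrix ι ι ℝ} (hA : A.PosDef)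
    {X : Fin m → α → Matrix ι ι ℝ} (hX : ∀ i b, 0 ≤ X i b) (hXR : ∀ i b, X i b ≤ R • A) :
    ∑ f : Fin m → α, (∏ i, w (f i)) * ((A + ∑ i, X i (f i)) ^ q).trace
      ≤ ((A + (1 + q * R) • ∑ i, ∑ b, w b • X i b) ^ q).trace := by
  induction m generalizing A with
  | zero => simp
  | succ m ih =>
    set S := (1 + q * R) • ∑ i : Fin m, ∑ b, w b • X i.succ b with hS
    have hS0 : 0 ≤ S := smul_nonneg (by positivity)
      (sum_nonneg fun i _ => sum_nonneg fun b _ => smul_nonneg (hw b) (hX i.succ b))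
    have hmono {Y : Matrix ι ι ℝ} (hY : 0 ≤ Y) : R • A ≤ R • (A + Y) :=
      smul_le_smul_of_nonneg_left (le_add_of_nonneg_right hY) hR
    calc ∑ f : Fin (m + 1) → α, (∏ i, w (f i)) * ((A + ∑ i, X i (f i)) ^ q).trace
        = ∑ b, w b * ∑ f : Fin m → α, (∏ i, w (f i)) *
          ((A + X 0 b + ∑ i : Fin m, X i.succ (f i)) ^ q).trace := by
          rw [← (Fin.consEquiv fun _ => α).sum_comp, Fintype.sum_prod_type]
          simp only [Fin.consEquiv, Equiv.coe_fn_mk, Fin.prod_univ_succ, Fin.sum_univ_succ,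
            Fin.cons_zero, Fin.cons_succ, add_assoc, mul_assoc, mul_sum]
      _ ≤ ∑ b, w b * ((A + S + X 0 b) ^ q).trace := by
          refine sum_le_sum fun b _ => mul_le_mul_of_nonneg_left ?_ (hw b)
          rw [add_right_comm]
          exact ih (hA.add_posSemidef (hX 0 b).posSemidef) (fun i => hX i.succ)
            fun i b' => (hXR i.succ b').trans (hmono (hX 0 b))
      _ ≤ ((A + S + (1 + q * R) • ∑ b, w b • X 0 b) ^ q).trace :=
          sum_mul_trace_pow_add_le (hA.add_posSemidef hS0.posSemidef) (hX 0)
            (fun b => (hXR 0 b).trans (hmono hS0)) hR hw hw1 hq hqR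
      _ = ((A + (1 + q * R) • ∑ i, ∑ b, w b • X i b) ^ q).trace := by
          rw [Fin.sum_univ_succ fun i => ∑ b, w b • X i b, smul_add, add_assoc, ← hS,
            add_comm S]

lemma matrix_chernoff_moment (hR : 0 ≤ R) (hw : ∀ b, 0 ≤ w b) (hw1 : ∑ b, w b = 1)
    (hq : q = 2 ^ k) (hqR : q * R ≤ 1) {A : Matrix ι ι ℝ} (hA : A.PosDef)
    {X : κ → α → Matrix ι ι ℝ} (hX : ∀ i b, 0 ≤ X i b) (hXR : ∀ i b, X i b ≤ R • A) :
    ∑ f : κ → α, (∏ i, w (f i)) * ((A + ∑ i, X i (f i)) ^ q).trace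
      ≤ ((A + (1 + q * R) • ∑ i, ∑ b, w b • X i b) ^ q).trace := by
  have σ := (Fintype.equivFin κ).symm
  rw [← (σ.arrowCongr (Equiv.refl α)).sum_comp, ← σ.sum_comp fun i => ∑ b, w b • X i b]
  convert matrix_chernoff_moment_fin hR hw hw1 hq hqR hA (fun i => hX (σ i)) (fun i => hXR (σ i))
    using 4 with f
  · simp [← σ.prod_comp]
  · simp [← σ.sum_comp]

lemma sum_filter_not_le_smul_one_mul_pow_le {Ω : Type*} [Fintype Ω] {W : Ω → ℝ}
    (hW : ∀ ω, 0 ≤ W ω) {M : Ω → Matrix ι ι ℝ} (hM : ∀ ω, 0 ≤ M ω) {c : ℝ} (hc : 0 ≤ c) (q : ℕ) :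
    (∑ ω with ¬ M ω ≤ c • 1, W ω) * c ^ q ≤ ∑ ω, W ω * (M ω ^ q).trace := by
  rw [sum_mul]
  calc ∑ ω with ¬ M ω ≤ c • 1, W ω * c ^ q
      ≤ ∑ ω with ¬ M ω ≤ c • 1, W ω * (M ω ^ q).trace :=
        sum_le_sum fun ω hω => mul_le_mul_of_nonneg_left
          (pow_le_trace_pow_of_not_le_smul_one (hM ω) hc (mem_filter.1 hω).2 q) (hW ω)
    _ ≤ ∑ ω, W ω * (M ω ^ q).trace :=
        sum_le_sum_of_subset_of_nonneg (filter_subset _ _) fun ω _ _ =>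
          mul_nonneg (hW ω) ((hM ω).posSemidef.pow q).trace_nonneg

end MatrixChernoff

section ColouredSums

variable {ι E κ κ' α β : Type*} [Fintype ι] [DecidableEq ι] [Fintype κ] [DecidableEq κ]
  [Fintype κ'] [DecidableEq κ'] [Fintype α] [Fintype β]
  {K : (E → ℝ) →ₗ[ℝ] Matrix ι ι ℝ} {R : ℝ} {k q : ℕ}

lemma colour_moment (hK : Monotone K) {c : E → κ}
    (hc : ∀ i, K (fun e => if c e = i then 1 else 0) ≤ R • 1) (hR : 0 ≤ R)
    {w : α → ℝ} (hw : ∀ a, 0 ≤ w a) (hw1 : ∑ a, w a = 1) (hq : q = 2 ^ k) (hqR : q * R ≤ 1)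
    {φ : α → E → ℝ} (hφ : ∀ a e, φ a e ∈ Set.Icc 0 1) :
    ∑ f : κ → α, (∏ i, w (f i)) * ((1 + K fun e => φ (f (c e)) e) ^ q).trace
      ≤ ((1 + (1 + q * R) • K fun e => ∑ a, w a * φ a e) ^ q).trace := by
  let X (i : κ) (a : α) : Matrix ι ι ℝ := K fun e => if c e = i then φ a e else 0
  have hX (i a) : 0 ≤ X i a := by
    rw [← map_zero K]
    exact hK fun e => by dsimp only [Pi.zero_apply]; split_ifs <;> simp [(hφ a e).1]
  have hXR (i a) : X i a ≤ R • 1 :=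
    le_trans (hK fun e => by dsimp only; split_ifs <;> simp [(hφ a e).2]) (hc i)
  have hsum (f : κ → α) : ∑ i, X i (f i) = K fun e => φ (f (c e)) e := by
    rw [← map_sum]
    congr 1
    ext e
    simp [Finset.sum_apply]
  have hmean : ∑ i, ∑ a, w a • X i a = K fun e => ∑ a, w a * φ a e := by
    simp only [X, ← map_smul, ← map_sum]
    congr 1
    ext e
    simp only [Finset.sum_apply, Pi.smul_apply, smul_eq_mul]
    rw [sum_comm]
    simp
  simpa only [hsum, hmean] using
    matrix_chernoff_moment hR hw hw1 hq hqR PosDef.one hX hXR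

lemma colour_moment_smul (hK : Monotone K) {c : E → κ}
    (hc : ∀ i, K (fun e => if c e = i then 1 else 0) ≤ R • 1) (hR : 0 ≤ R)
    {w : α → ℝ} (hw : ∀ a, 0 ≤ w a) (hw1 : ∑ a, w a = 1) (hq : q = 2 ^ k)
    {s : ℝ} (hs : 0 ≤ s) (hqR : q * (s * R) ≤ 1)
    {φ : α → E → ℝ} (hφ : ∀ a e, φ a e ∈ Set.Icc 0 1) :
    ∑ f : κ → α, (∏ i, w (f i)) * ((1 + s • K fun e => φ (f (c e)) e) ^ q).trace
      ≤ ((1 + ((1 + q * (s * R)) * s) • K fun e => ∑ a, w a * φ a e) ^ q).trace := by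
  have hsK : Monotone (s • K) := fun t u htu => smul_le_smul_of_nonneg_left (hK htu) hs
  have hsc (i) : (s • K) (fun e => if c e = i then 1 else 0) ≤ (s * R) • 1 := by
    rw [mul_smul]
    exact smul_le_smul_of_nonneg_left (hc i) hs
  simpa only [LinearMap.smul_apply, smul_smul] using
    colour_moment hsK hsc (mul_nonneg hs hR) hw hw1 hq hqR hφ

lemma trace_one_add_smul_map_const_pow_le (hK : Monotone K) (hK1 : K 1 ≤ 1) {s p : ℝ}
    (hs : 0 ≤ s) (hp : 0 ≤ p) (q : ℕ) :
    ((1 + s • K fun _ => p) ^ q).trace ≤ Fintype.card ι * (1 + s * p) ^ q := by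
  have hconst : s • K (fun _ => p) = (s * p) • K 1 := by
    rw [mul_smul, ← map_smul K p]
    congr 2
    ext
    simp
  have hK0 : 0 ≤ K 1 := map_zero K ▸ hK (zero_le_one' (E → ℝ))
  have h0 : 0 ≤ 1 + (s * p) • K 1 :=
    add_nonneg zero_le_one (smul_nonneg (mul_nonneg hs hp) hK0)
  rw [hconst]
  refine trace_pow_le_card_mul_pow h0 ?_ q
  rw [add_smul, one_smul]
  exact add_le_add_right (smul_le_smul_of_nonneg_left hK1 (mul_nonneg hs hp)) 1

/-- Average over one family of colours with the other one frozen; the conditional means are again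
a function of the second colour, so the one-family bound applies once more. -/
lemma two_colour_moment (hK : Monotone K) (hK1 : K 1 ≤ 1) {c₁ : E → κ} {c₂ : E → κ'}
    (h₁ : ∀ i, K (fun e => if c₁ e = i then 1 else 0) ≤ R • 1)
    (h₂ : ∀ j, K (fun e => if c₂ e = j then 1 else 0) ≤ R • 1) (hR : 0 ≤ R)
    {w₁ : α → ℝ} (hw₁ : ∀ a, 0 ≤ w₁ a) (hw₁' : ∑ a, w₁ a = 1)
    {w₂ : β → ℝ} (hw₂ : ∀ b, 0 ≤ w₂ b) (hw₂' : ∑ b, w₂ b = 1)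
    (hq : q = 2 ^ k) (hqR : q * R ≤ 1 / 4)
    {θ : α → β → ℝ} (hθ : ∀ a b, θ a b ∈ Set.Icc 0 1) :
    ∑ g : κ' → β, (∏ j, w₂ (g j)) * ∑ f : κ → α, (∏ i, w₁ (f i)) *
        ((1 + K fun e => θ (f (c₁ e)) (g (c₂ e))) ^ q).trace
      ≤ Fintype.card ι * (1 + (1 + 3 * (q * R)) * ∑ b, w₂ b * ∑ a, w₁ a * θ a b) ^ q := by
  set ε : ℝ := q * R
  have hε0 : 0 ≤ ε := by positivity
  have hε' : q * ((1 + ε) * R) = (1 + ε) * ε := by rw [mul_left_comm]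
  have hθ₁ (b) : ∑ a, w₁ a * θ a b ∈ Set.Icc 0 1 :=
    ⟨sum_nonneg fun a _ => mul_nonneg (hw₁ a) (hθ a b).1,
      (sum_le_sum fun a _ => mul_le_of_le_one_right (hw₁ a) (hθ a b).2).trans hw₁'.le⟩
  have hp : 0 ≤ ∑ b, w₂ b * ∑ a, w₁ a * θ a b :=
    sum_nonneg fun b _ => mul_nonneg (hw₂ b) (hθ₁ b).1
  have hfactor : (1 + (1 + ε) * ε) * (1 + ε) ≤ 1 + 3 * ε := by
    have hsq : ε * ε ≤ ε * (1 / 4) := mul_le_mul_of_nonneg_left hqR hε0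
    nlinarith [mul_le_mul_of_nonneg_left hsq hε0]
  calc ∑ g : κ' → β, (∏ j, w₂ (g j)) * ∑ f : κ → α, (∏ i, w₁ (f i)) *
        ((1 + K fun e => θ (f (c₁ e)) (g (c₂ e))) ^ q).trace
      ≤ ∑ g : κ' → β, (∏ j, w₂ (g j)) *
          ((1 + (1 + ε) • K fun e => ∑ a, w₁ a * θ a (g (c₂ e))) ^ q).trace :=
        sum_le_sum fun g _ => mul_le_mul_of_nonneg_left
          (colour_moment hK h₁ hR hw₁ hw₁' hq (hqR.trans (by norm_num))
            (φ := fun a e => θ a (g (c₂ e))) fun a e => hθ a (g (c₂ e)))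
          (prod_nonneg fun j _ => hw₂ _)
    _ ≤ ((1 + ((1 + (1 + ε) * ε) * (1 + ε)) • K fun _ => ∑ b, w₂ b * ∑ a, w₁ a * θ a b)
          ^ q).trace := by
        have h := colour_moment_smul hK h₂ hR hw₂ hw₂' hq (s := 1 + ε) (by positivity)
          (by rw [hε']; nlinarith) fun b (_ : E) => hθ₁ b
        rwa [hε'] at h
    _ ≤ Fintype.card ι * (1 + ((1 + (1 + ε) * ε) * (1 + ε)) *
          ∑ b, w₂ b * ∑ a, w₁ a * θ a b) ^ q :=
        trace_one_add_smul_map_const_pow_le hK hK1 (by positivity) hp q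
    _ ≤ Fintype.card ι * (1 + (1 + 3 * ε) * ∑ b, w₂ b * ∑ a, w₁ a * θ a b) ^ q := by
        gcongr

end ColouredSums

section TwoColourConcentration

lemma exists_two_pow_mem_Icc {x : ℝ} (hx : 1 ≤ x) : ∃ k : ℕ, (2 : ℝ) ^ k ∈ Set.Icc x (2 * x) := by
  obtain ⟨k, hkx, hxk⟩ := exists_nat_pow_near hx one_lt_two
  exact ⟨k + 1, hxk.le, by rw [pow_succ']; linarith⟩

/-- The floor `1 / 3` leaves room for the additive `1`: with `μ = max p (1 / 6)` it gives
`1 + (1 + δ / 2) * μ ≤ (1 - δ / 24) * (1 + (1 + δ) * μ)`, and `q` such factors beat `N ^ 3`. -/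
lemma mul_one_add_pow_le_one_add_max_pow_div {N p δ : ℝ} {q : ℕ} (hN : 0 < N) (hδ : 0 ≤ δ)
    (hδ1 : δ ≤ 1) (hq : 72 * Real.log N ≤ q * δ) (hp : 0 ≤ p) :
    N * (1 + (1 + δ / 2) * p) ^ q ≤ (1 + max ((1 + δ) * p) (1 / 3)) ^ q / N ^ 2 := by
  set τ := max ((1 + δ) * p) (1 / 3)
  have hτp : (1 + δ) * p ≤ τ := le_max_left _ _
  have hτ : 1 / 3 ≤ τ := le_max_right _ _
  have hbase : 1 + (1 + δ / 2) * p ≤ Real.exp (-(δ / 24)) * (1 + τ) := by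
    have hexp : 1 - δ / 24 ≤ Real.exp (-(δ / 24)) := by
      linarith [Real.add_one_le_exp (-(δ / 24))]
    have hroom : 1 + (1 + δ / 2) * p ≤ (1 - δ / 24) * (1 + τ) := by
      have hδ24 : 0 ≤ 1 - δ / 24 := by linarith
      rcases le_total p (1 / 6) with h | h
      · nlinarith [mul_le_mul_of_nonneg_left hτ hδ24]
      · nlinarith [mul_le_mul_of_nonneg_left hτp hδ24, mul_nonneg hδ (sub_nonneg.2 h),
          mul_nonneg (mul_nonneg hδ hp) (sub_nonneg.2 hδ1)]
    exact hroom.trans (mul_le_mul_of_nonneg_right hexp (by linarith))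
  have hdecay : Real.exp (-(δ / 24)) ^ q ≤ 1 / N ^ 3 := by
    calc Real.exp (-(δ / 24)) ^ q ≤ Real.exp (-(3 * Real.log N)) := by
          rw [← Real.exp_nat_mul]
          exact Real.exp_le_exp.2 (by linarith)
      _ = 1 / N ^ 3 := by
          rw [Real.exp_neg, mul_comm, Real.exp_mul, Real.exp_log hN, one_div]
          norm_cast
  calc N * (1 + (1 + δ / 2) * p) ^ q ≤ N * (Real.exp (-(δ / 24)) * (1 + τ)) ^ q := by gcongr
    _ = Real.exp (-(δ / 24)) ^ q * (N * (1 + τ) ^ q) := by rw [mul_pow]; ring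
    _ ≤ 1 / N ^ 3 * (N * (1 + τ) ^ q) :=
        mul_le_mul_of_nonneg_right hdecay (mul_nonneg hN.le (pow_nonneg (by linarith) q))
    _ = (1 + τ) ^ q / N ^ 2 := by field_simp

variable {ι E κ κ' α β : Type*} [Fintype ι] [Fintype κ] [DecidableEq κ] [Fintype κ']
  [DecidableEq κ'] [Fintype α] [Fintype β]
  {K : (E → ℝ) →ₗ[ℝ] Matrix ι ι ℝ} {R : ℝ} {c₁ : E → κ} {c₂ : E → κ'}
  {w₁ : α → ℝ} {w₂ : β → ℝ} {θ : α → β → ℝ}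

lemma two_colour_tail_mul_pow_le [DecidableEq ι] (hK : Monotone K) (hK1 : K 1 ≤ 1)
    (h₁ : ∀ i, K (fun e => if c₁ e = i then 1 else 0) ≤ R • 1)
    (h₂ : ∀ j, K (fun e => if c₂ e = j then 1 else 0) ≤ R • 1) (hR : 0 ≤ R)
    (hw₁ : ∀ a, 0 ≤ w₁ a) (hw₁' : ∑ a, w₁ a = 1) (hw₂ : ∀ b, 0 ≤ w₂ b) (hw₂' : ∑ b, w₂ b = 1)
    {k q : ℕ} (hq : q = 2 ^ k) (hqR : q * R ≤ 1 / 4) (hθ : ∀ a b, θ a b ∈ Set.Icc 0 1)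
    {τ : ℝ} (hτ : 0 ≤ τ) :
    (∑ f : (κ → α) × (κ' → β) with ¬ K (fun e => θ (f.1 (c₁ e)) (f.2 (c₂ e))) ≤ τ • 1,
        (∏ i, w₁ (f.1 i)) * ∏ j, w₂ (f.2 j)) * (1 + τ) ^ q
      ≤ Fintype.card ι * (1 + (1 + 3 * (q * R)) * ∑ b, w₂ b * ∑ a, w₁ a * θ a b) ^ q := by
  have hshift (X : Matrix ι ι ℝ) : X ≤ τ • 1 ↔ 1 + X ≤ (1 + τ) • 1 := by
    rw [add_smul, one_smul, add_le_add_iff_left]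
  have hK0 (f : (κ → α) × (κ' → β)) : 0 ≤ 1 + K fun e => θ (f.1 (c₁ e)) (f.2 (c₂ e)) :=
    add_nonneg zero_le_one (map_zero K ▸ hK fun e => (hθ _ _).1)
  have hW (f : (κ → α) × (κ' → β)) : 0 ≤ (∏ i, w₁ (f.1 i)) * ∏ j, w₂ (f.2 j) :=
    mul_nonneg (prod_nonneg fun i _ => hw₁ _) (prod_nonneg fun j _ => hw₂ _)
  simp only [hshift]
  refine (sum_filter_not_le_smul_one_mul_pow_le hW hK0 (by positivity) q).trans ?_
  rw [Fintype.sum_prod_type_right]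
  simpa only [mul_sum, mul_assoc, mul_left_comm] using
    two_colour_moment hK hK1 h₁ h₂ hR hw₁ hw₁' hw₂ hw₂' hq hqR hθ

lemma exists_isUnit_star_conj_eq_one [DecidableEq ι] {N : Matrix ι ι ℝ} (hN : N.PosDef) :
    ∃ S : Matrix ι ι ℝ, IsUnit S ∧ star S * N * S = 1 := by
  obtain ⟨_, ⟨T, rfl⟩, rfl⟩ :=
    CStarAlgebra.isStrictlyPositive_iff_eq_star_mul_self.1 hN.isStrictlyPositive
  refine ⟨↑T⁻¹, T⁻¹.isUnit, ?_⟩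
  rw [Matrix.mul_assoc, Matrix.mul_assoc, Units.mul_inv, Matrix.mul_one, ← star_mul, Units.mul_inv,
    star_one]

lemma two_colour_concentration_one [DecidableEq ι] [Nontrivial ι] (hK : Monotone K)
    (hK1 : K 1 ≤ 1)
    (h₁ : ∀ i, K (fun e => if c₁ e = i then 1 else 0) ≤ R • 1)
    (h₂ : ∀ j, K (fun e => if c₂ e = j then 1 else 0) ≤ R • 1) (hR : 0 ≤ R)
    (hw₁ : ∀ a, 0 ≤ w₁ a) (hw₁' : ∑ a, w₁ a = 1) (hw₂ : ∀ b, 0 ≤ w₂ b) (hw₂' : ∑ b, w₂ b = 1)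
    (hθ : ∀ a b, θ a b ∈ Set.Icc 0 1) {δ : ℝ} (hδ : 0 < δ) (hδ1 : δ ≤ 1)
    (hRδ : 864 * (R * Real.log (Fintype.card ι)) ≤ δ ^ 2) :
    ∑ f : (κ → α) × (κ' → β) with ¬ K (fun e => θ (f.1 (c₁ e)) (f.2 (c₂ e))) ≤
        max ((1 + δ) * ∑ b, w₂ b * ∑ a, w₁ a * θ a b) (1 / 3) • 1,
      (∏ i, w₁ (f.1 i)) * ∏ j, w₂ (f.2 j) ≤ 1 / (Fintype.card ι : ℝ) ^ 2 := by
  set p := ∑ b, w₂ b * ∑ a, w₁ a * θ a b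
  set τ := max ((1 + δ) * p) (1 / 3)
  set ℓ := Real.log (Fintype.card ι)
  have hp : 0 ≤ p := sum_nonneg fun b _ => mul_nonneg (hw₂ b)
    (sum_nonneg fun a _ => mul_nonneg (hw₁ a) (hθ a b).1)
  have hτ : 0 < τ := lt_max_of_lt_right (by norm_num)
  have hℓ : Real.log 2 ≤ ℓ :=
    Real.log_le_log two_pos (by exact_mod_cast Fintype.one_lt_card)
  obtain ⟨k, hk, hk'⟩ : ∃ k : ℕ, (2 : ℝ) ^ k ∈ Set.Icc (72 * ℓ / δ) (2 * (72 * ℓ / δ)) :=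
    exists_two_pow_mem_Icc ((one_le_div hδ).2 (by linarith [Real.log_two_gt_d9]))
  obtain ⟨q, hq⟩ : ∃ q, q = 2 ^ k := ⟨_, rfl⟩
  have hq' : (q : ℝ) = 2 ^ k := by rw [hq]; push_cast; rfl
  rw [← hq'] at hk hk'
  have hqR : q * R ≤ δ / 6 := by
    calc q * R ≤ 2 * (72 * ℓ / δ) * R := mul_le_mul_of_nonneg_right hk' hR
      _ = 864 * (R * ℓ) / (6 * δ) := by field_simp; ring
      _ ≤ δ ^ 2 / (6 * δ) := by gcongr
      _ = δ / 6 := by field_simp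
  rw [← mul_le_mul_iff_of_pos_right (pow_pos (by positivity : 0 < 1 + τ) q)]
  calc _ ≤ Fintype.card ι * (1 + (1 + 3 * (q * R)) * p) ^ q :=
        two_colour_tail_mul_pow_le hK hK1 h₁ h₂ hR hw₁ hw₁' hw₂ hw₂' hq (by linarith) hθ hτ.le
    _ ≤ Fintype.card ι * (1 + (1 + δ / 2) * p) ^ q := by
        gcongr
        linarith
    _ ≤ (1 + τ) ^ q / Fintype.card ι ^ 2 :=
        mul_one_add_pow_le_one_add_max_pow_div (mod_cast Fintype.card_pos) hδ.le hδ1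
          ((div_le_iff₀ hδ).1 hk) hp
    _ = 1 / (Fintype.card ι : ℝ) ^ 2 * (1 + τ) ^ q := by ring

theorem two_colour_concentration [Nontrivial ι] (hK : Monotone K) {N : Matrix ι ι ℝ}
    (hN : N.PosDef) (hK1 : K 1 ≤ N)
    (h₁ : ∀ i, K (fun e => if c₁ e = i then 1 else 0) ≤ R • N)
    (h₂ : ∀ j, K (fun e => if c₂ e = j then 1 else 0) ≤ R • N) (hR : 0 ≤ R)
    (hw₁ : ∀ a, 0 ≤ w₁ a) (hw₁' : ∑ a, w₁ a = 1) (hw₂ : ∀ b, 0 ≤ w₂ b) (hw₂' : ∑ b, w₂ b = 1)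
    (hθ : ∀ a b, θ a b ∈ Set.Icc 0 1) {δ : ℝ} (hδ : 0 < δ) (hδ1 : δ ≤ 1)
    (hRδ : 864 * (R * Real.log (Fintype.card ι)) ≤ δ ^ 2) :
    ∑ f : (κ → α) × (κ' → β) with ¬ K (fun e => θ (f.1 (c₁ e)) (f.2 (c₂ e))) ≤
        max ((1 + δ) * ∑ b, w₂ b * ∑ a, w₁ a * θ a b) (1 / 3) • N,
      (∏ i, w₁ (f.1 i)) * ∏ j, w₂ (f.2 j) ≤ 1 / (Fintype.card ι : ℝ) ^ 2 := by
  classical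
  obtain ⟨S, hS, hSN⟩ := exists_isUnit_star_conj_eq_one hN
  let K' : (E → ℝ) →ₗ[ℝ] Matrix ι ι ℝ := LinearMap.mulLeftRight ℝ (star S, S) ∘ₗ K
  have hK'le (t : E → ℝ) (c : ℝ) : K t ≤ c • N ↔ K' t ≤ c • 1 := by
    rw [← sub_nonneg, ← hS.star_left_conjugate_nonneg_iff, ← sub_nonneg (b := K' t), ← hSN]
    simp [K', mul_sub, sub_mul]
  have hK' : Monotone K' := fun s t hst => by
    simpa [K'] using star_left_conjugate_le_conjugate (hK hst) S
  simp only [hK'le] at h₁ h₂ ⊢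
  refine two_colour_concentration_one hK' ?_ h₁ h₂ hR hw₁ hw₁' hw₂ hw₂' hθ hδ hδ1 hRδ
  simpa using (hK'le 1 1).1 (by simpa using hK1)

end TwoColourConcentration

section QuadraticForms

variable {V : Type*} [Fintype V]

lemma le_iff_forall_dotProduct_mulVec_le {A B : Matrix V V ℝ} (hA : A.IsHermitian)
    (hB : B.IsHermitian) : A ≤ B ↔ ∀ x, x ⬝ᵥ A *ᵥ x ≤ x ⬝ᵥ B *ᵥ x := by
  rw [Matrix.le_iff, posSemidef_iff_dotProduct_mulVec, and_iff_right (hB.sub hA)]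
  simp [Matrix.sub_mulVec]

lemma dotProduct_vecMulVec_mulVec_self (d x : V → ℝ) :
    x ⬝ᵥ vecMulVec d d *ᵥ x = (d ⬝ᵥ x) ^ 2 := by
  rw [vecMulVec_mulVec, op_smul_eq_smul, dotProduct_smul, smul_eq_mul, dotProduct_comm x, pow_two]

lemma dotProduct_div_mul_mulVec (M : Matrix V V ℝ) (s z : V → ℝ) :
    z ⬝ᵥ (Matrix.of fun i j => M i j / (s i * s j)) *ᵥ z =
      (fun v => z v / s v) ⬝ᵥ M *ᵥ fun v => z v / s v := by
  simp only [dotProduct, mulVec, of_apply, mul_sum]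
  refine sum_congr rfl fun i _ => sum_congr rfl fun j _ => ?_
  ring

lemma mul_sum_sq_le_of_rayleigh_le {A : Matrix V V ℝ} {s : V → ℝ} {lam : ℝ}
    (h : ∀ z : V → ℝ, ∑ v, z v * s v = 0 → ∑ v, z v ^ 2 = 1 → lam ≤ z ⬝ᵥ A *ᵥ z)
    {z : V → ℝ} (hz : ∑ v, z v * s v = 0) : lam * ∑ v, z v ^ 2 ≤ z ⬝ᵥ A *ᵥ z := by
  set Q := ∑ v, z v ^ 2
  have hQ0 : 0 ≤ Q := sum_nonneg fun v _ => sq_nonneg (z v)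
  rcases hQ0.eq_or_lt with h0 | h0
  · have hz0 : z = 0 := funext fun v => pow_eq_zero_iff two_ne_zero |>.1 <|
      (sum_eq_zero_iff_of_nonneg fun v _ => sq_nonneg (z v)).1 h0.symm v (mem_univ v)
    simp [← h0, hz0]
  · have hunit := h ((√Q)⁻¹ • z)
      (by simp only [Pi.smul_apply, smul_eq_mul, mul_assoc, ← mul_sum, hz, mul_zero])
      (by
        simp only [Pi.smul_apply, smul_eq_mul, mul_pow, ← mul_sum, inv_pow, Real.sq_sqrt hQ0]
        exact inv_mul_cancel₀ h0.ne')
    rw [Matrix.mulVec_smul, dotProduct_smul, smul_dotProduct, smul_smul, ← mul_inv,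
      Real.mul_self_sqrt hQ0, smul_eq_mul, ← div_eq_inv_mul] at hunit
    exact (le_div_iff₀ h0).1 hunit

lemma exists_sum_mul_sub_eq_zero {d : V → ℝ} (hd : ∑ v, d v ≠ 0) (x : V → ℝ) :
    ∃ r : ℝ, ∑ v, d v * (x v - r) = 0 := by
  refine ⟨(∑ v, d v * x v) / ∑ v, d v, ?_⟩
  simp only [mul_sub, sum_sub_distrib, ← sum_mul]
  rw [mul_div_cancel₀ _ hd, sub_self]

end QuadraticForms

section WeightedLaplacian

variable {V : Type} {E : Type*} [DecidableEq V]

lemma edgeLapV_eq_vecMulVec (u v : V) :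
    edgeLapV u v = vecMulVec (Pi.single u 1 - Pi.single v 1) (Pi.single u 1 - Pi.single v 1) := by
  ext i j
  simp [edgeLapV, vecMulVec_apply, Pi.single_apply]

variable [Fintype E] {a b : E → V}

/-- The Laplacian of the multigraph with edges `{a e, b e}` of weight `t e`, as a linear function
of the weights; at `t = 1` it is the Laplacian of the multigraph itself. -/
noncomputable def weightedLap (a b : E → V) : (E → ℝ) →ₗ[ℝ] Matrix V V ℝ :=
  Fintype.linearCombination ℝ fun e => edgeLapV (a e) (b e)

lemma weightedLap_apply (t : E → ℝ) :
    weightedLap a b t = ∑ e, t e • edgeLapV (a e) (b e) :=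
  Fintype.linearCombination_apply ..

lemma weightedLap_one : weightedLap a b 1 = ∑ e, edgeLapV (a e) (b e) := by
  simp [weightedLap_apply]

lemma weightedLap_isHermitian (t : E → ℝ) : (weightedLap a b t).IsHermitian := by
  ext i j
  simp [weightedLap_apply, Matrix.sum_apply, edgeLapV, mul_comm]

lemma weightedLap_mono [Finite V] : Monotone (weightedLap a b) := fun s t hst => by
  have := Fintype.ofFinite V
  rw [weightedLap_apply, weightedLap_apply]
  refine sum_le_sum fun e _ => smul_le_smul_of_nonneg_right (hst e) ?_
  rw [edgeLapV_eq_vecMulVec]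
  exact (posSemidef_vecMulVec_self_star _).nonneg

variable [Fintype V]

lemma dotProduct_weightedLap_mulVec (t : E → ℝ) (x : V → ℝ) :
    x ⬝ᵥ weightedLap a b t *ᵥ x = ∑ e, t e * (x (a e) - x (b e)) ^ 2 := by
  simp only [weightedLap_apply, Matrix.sum_mulVec, dotProduct_sum, smul_mulVec, dotProduct_smul,
    edgeLapV_eq_vecMulVec, dotProduct_vecMulVec_mulVec_self, sub_dotProduct,
    single_one_dotProduct, smul_eq_mul]

lemma sum_weight_mul_sq_sub_le {t : E → ℝ} (ht : 0 ≤ t) {Δ : ℝ}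
    (hdeg : ∀ v, ∑ e with a e = v ∨ b e = v, t e ≤ Δ) (x : V → ℝ) :
    ∑ e, t e * (x (a e) - x (b e)) ^ 2 ≤ 2 * Δ * ∑ v, x v ^ 2 := by
  have hedge (e : E) :
      (x (a e) - x (b e)) ^ 2 ≤ 2 * ∑ v, if a e = v ∨ b e = v then x v ^ 2 else 0 := by
    rw [← sum_filter]
    rcases eq_or_ne (a e) (b e) with hab | hab
    · rw [hab, sub_self, zero_pow two_ne_zero]
      exact mul_nonneg zero_le_two (sum_nonneg fun v _ => sq_nonneg (x v))
    · have hends : univ.filter (fun v => a e = v ∨ b e = v) = {a e, b e} := by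
        ext v
        simp [eq_comm]
      rw [hends, sum_pair hab]
      linarith [sq_nonneg (x (a e) + x (b e))]
  calc ∑ e, t e * (x (a e) - x (b e)) ^ 2
      ≤ ∑ e, t e * (2 * ∑ v, if a e = v ∨ b e = v then x v ^ 2 else 0) :=
        sum_le_sum fun e _ => mul_le_mul_of_nonneg_left (hedge e) (ht e)
    _ = 2 * ∑ v, (∑ e with a e = v ∨ b e = v, t e) * x v ^ 2 := by
        simp only [mul_sum, sum_mul, sum_filter, ite_mul, mul_ite, zero_mul, mul_zero,
          mul_left_comm (2 : ℝ)]
        exact sum_comm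
    _ ≤ 2 * ∑ v, Δ * x v ^ 2 := by
        gcongr with v
        exact hdeg v
    _ = 2 * Δ * ∑ v, x v ^ 2 := by rw [← mul_sum, mul_assoc]

/-- The spectral gap of the multigraph with edges `{a e, b e}` in variational form: on the vectors
orthogonal to the vertex weights `d`, the Laplacian is at least `g` times the identity. -/
def PoincareInequality (a b : E → V) (d : V → ℝ) (g : ℝ) : Prop :=
  ∀ y : V → ℝ, ∑ v, d v * y v = 0 → g * ∑ v, y v ^ 2 ≤ ∑ e, (y (a e) - y (b e)) ^ 2

lemma poincareInequality_of_rayleigh_le {d : V → ℝ} (hd : ∀ v, 0 < d v) {dmin lam : ℝ}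
    (hdmin : ∀ v, dmin ≤ d v) (hlam : 0 ≤ lam)
    (h : ∀ z : V → ℝ, ∑ v, z v * √(d v) = 0 → ∑ v, z v ^ 2 = 1 →
      lam ≤ z ⬝ᵥ (Matrix.of fun i j =>
        (∑ e, edgeLapV (a e) (b e)) i j / (√(d i) * √(d j))) *ᵥ z) :
    PoincareInequality a b d (dmin * lam) := fun y hy => by
  have hsq (v) : √(d v) * √(d v) = d v := Real.mul_self_sqrt (hd v).le
  have hcancel (v) : √(d v) * y v / √(d v) = y v :=
    mul_div_cancel_left₀ _ (Real.sqrt_pos.2 (hd v)).ne'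
  have horth : ∑ v, √(d v) * y v * √(d v) = 0 := by
    simpa only [mul_right_comm _ (y _), hsq] using hy
  have hray := mul_sum_sq_le_of_rayleigh_le h horth
  rw [dotProduct_div_mul_mulVec, ← weightedLap_one, dotProduct_weightedLap_mulVec] at hray
  simp only [hcancel, Pi.one_apply, one_mul, mul_pow, Real.sq_sqrt (hd _).le] at hray
  calc dmin * lam * ∑ v, y v ^ 2 = lam * ∑ v, dmin * y v ^ 2 := by rw [← mul_sum]; ring
    _ ≤ lam * ∑ v, d v * y v ^ 2 := by
      gcongr with v
      exact hdmin v
    _ ≤ ∑ e, (y (a e) - y (b e)) ^ 2 := hray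

variable {d : V → ℝ} {g : ℝ}

/-- The rank-one term grounds the Laplacian: it removes the kernel of constant vectors. -/
lemma PoincareInequality.posDef_weightedLap_add_vecMulVec (h : PoincareInequality a b d g)
    (hg : 0 < g) : (weightedLap a b 1 + vecMulVec d d).PosDef := by
  have hd : (vecMulVec d d).PosSemidef := posSemidef_vecMulVec_self_star d
  refine PosDef.of_dotProduct_mulVec_pos ((weightedLap_isHermitian 1).add hd.1) fun x hx => ?_
  rw [star_trivial, Matrix.add_mulVec, dotProduct_add, dotProduct_weightedLap_mulVec,
    dotProduct_vecMulVec_mulVec_self]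
  simp only [Pi.one_apply, one_mul]
  rcases eq_or_ne (d ⬝ᵥ x) 0 with hdx | hdx
  · obtain ⟨v, hv⟩ := Function.ne_iff.1 hx
    have hx2 : 0 < ∑ v, x v ^ 2 :=
      sum_pos' (fun v _ => sq_nonneg _) ⟨v, mem_univ v, sq_pos_of_ne_zero hv⟩
    nlinarith [h x hdx, mul_pos hg hx2]
  · positivity

lemma weightedLap_le_smul_add_vecMulVec_iff (hd : ∑ v, d v ≠ 0) {τ : ℝ} (hτ : 0 ≤ τ)
    (t : E → ℝ) :
    weightedLap a b t ≤ τ • (weightedLap a b 1 + vecMulVec d d) ↔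
      weightedLap a b t ≤ τ • weightedLap a b 1 := by
  have hdd : (vecMulVec d d).PosSemidef := posSemidef_vecMulVec_self_star d
  have hH := weightedLap_isHermitian (a := a) (b := b)
  constructor
  · intro hle
    rw [← map_smul, le_iff_forall_dotProduct_mulVec_le (hH _) (hH _)]
    intro x
    obtain ⟨r, hr⟩ := exists_sum_mul_sub_eq_zero hd x
    have hdr : d ⬝ᵥ (fun v => x v - r) = 0 := hr
    have hx := (le_iff_forall_dotProduct_mulVec_le (hH _)
      (((hH 1).add hdd.1).smul (IsSelfAdjoint.all τ))).1 hle fun v => x v - r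
    rw [Matrix.smul_mulVec, Matrix.add_mulVec, dotProduct_smul, dotProduct_add,
      dotProduct_vecMulVec_mulVec_self, hdr, zero_pow two_ne_zero, add_zero] at hx
    simpa [dotProduct_weightedLap_mulVec, Matrix.smul_mulVec, mul_sum] using hx
  · exact fun hle => hle.trans
      (smul_le_smul_of_nonneg_left (le_add_of_nonneg_right hdd.nonneg) hτ)

lemma PoincareInequality.weightedLap_le_smul (h : PoincareInequality a b d g) (hg : 0 < g)
    (hd : ∑ v, d v ≠ 0) {t : E → ℝ} (ht : 0 ≤ t) {Δ : ℝ} (hΔ : 0 ≤ Δ)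
    (hdeg : ∀ v, ∑ e with a e = v ∨ b e = v, t e ≤ Δ) :
    weightedLap a b t ≤ (2 * Δ / g) • weightedLap a b 1 := by
  rw [← map_smul, le_iff_forall_dotProduct_mulVec_le (weightedLap_isHermitian _)
    (weightedLap_isHermitian _)]
  intro x
  obtain ⟨r, hr⟩ := exists_sum_mul_sub_eq_zero hd x
  have hupper := sum_weight_mul_sq_sub_le ht hdeg fun v => x v - r
  have hlower := h (fun v => x v - r) hr
  simp only [sub_sub_sub_cancel_right] at hupper hlower
  simp only [dotProduct_weightedLap_mulVec, Pi.smul_apply, Pi.one_apply, smul_eq_mul, mul_one,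
    ← mul_sum]
  calc ∑ e, t e * (x (a e) - x (b e)) ^ 2 ≤ 2 * Δ * ∑ v, (x v - r) ^ 2 := hupper
    _ ≤ 2 * Δ * ((∑ e, (x (a e) - x (b e)) ^ 2) / g) := by
      gcongr
      exact (le_div_iff₀' hg).2 hlower
    _ = 2 * Δ / g * ∑ e, (x (a e) - x (b e)) ^ 2 := by ring

end WeightedLaplacian

section Sparsification

theorem PoincareInequality.weightedLap_concentration {V : Type} {E κ κ' α β : Type*} [Fintype V]
    [DecidableEq V] [Nontrivial V] [Fintype E] [Fintype κ] [DecidableEq κ] [Fintype κ']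
    [DecidableEq κ'] [Fintype α] [Fintype β] {a b : E → V} {d : V → ℝ} {g Δ δ : ℝ}
    (h : PoincareInequality a b d g) (hg : 0 < g) (hd : ∑ v, d v ≠ 0) (hΔ : 0 ≤ Δ)
    {c₁ : E → κ} {c₂ : E → κ'}
    (h₁ : ∀ i v, (#{e | c₁ e = i ∧ (a e = v ∨ b e = v)} : ℝ) ≤ Δ)
    (h₂ : ∀ j v, (#{e | c₂ e = j ∧ (a e = v ∨ b e = v)} : ℝ) ≤ Δ)
    {w₁ : α → ℝ} (hw₁ : ∀ x, 0 ≤ w₁ x) (hw₁' : ∑ x, w₁ x = 1)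
    {w₂ : β → ℝ} (hw₂ : ∀ y, 0 ≤ w₂ y) (hw₂' : ∑ y, w₂ y = 1)
    {θ : α → β → ℝ} (hθ : ∀ x y, θ x y ∈ Set.Icc 0 1) (hδ : 0 < δ) (hδ1 : δ ≤ 1)
    (hgδ : 1728 * Δ * Real.log (Fintype.card V) / g ≤ δ ^ 2) :
    ∑ f : (κ → α) × (κ' → β) with
        ¬ weightedLap a b (fun e => θ (f.1 (c₁ e)) (f.2 (c₂ e))) ≤
          max ((1 + δ) * ∑ y, w₂ y * ∑ x, w₁ x * θ x y) (1 / 3) • weightedLap a b 1,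
      (∏ i, w₁ (f.1 i)) * ∏ j, w₂ (f.2 j) ≤ 1 / (Fintype.card V : ℝ) ^ 2 := by
  have hclass (P : E → Prop) [DecidablePred P]
      (hP : ∀ v, (#{e | P e ∧ (a e = v ∨ b e = v)} : ℝ) ≤ Δ) :
      weightedLap a b (fun e => if P e then 1 else 0) ≤
        (2 * Δ / g) • (weightedLap a b 1 + vecMulVec d d) := by
    rw [weightedLap_le_smul_add_vecMulVec_iff hd (by positivity)]
    refine h.weightedLap_le_smul hg hd (fun e => by positivity) hΔ fun v => ?_
    rw [sum_boole, filter_filter]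
    simpa only [and_comm] using hP v
  have hone : weightedLap a b 1 ≤ weightedLap a b 1 + vecMulVec d d :=
    le_add_of_nonneg_right (posSemidef_vecMulVec_self_star d).nonneg
  have hτ (p : ℝ) : 0 ≤ max ((1 + δ) * p) (1 / 3) := le_max_of_le_right (by norm_num)
  have htail := two_colour_concentration (K := weightedLap a b) (θ := θ) weightedLap_mono
    (h.posDef_weightedLap_add_vecMulVec hg) hone (fun i => hclass (c₁ · = i) (h₁ i))
    (fun j => hclass (c₂ · = j) (h₂ j)) (by positivity) hw₁ hw₁' hw₂ hw₂' hθ hδ hδ1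
    (le_of_eq_of_le (by ring) hgδ)
  simpa only [weightedLap_le_smul_add_vecMulVec_iff hd (hτ _)] using htail

end Sparsification

section RandomSigns

lemma sum_prod_mul_prod_eq_one {κ κ' α β : Type*} [Fintype κ] [DecidableEq κ] [Fintype κ']
    [DecidableEq κ'] [Fintype α] [Fintype β] {w₁ : α → ℝ} {w₂ : β → ℝ} (hw₁ : ∑ x, w₁ x = 1)
    (hw₂ : ∑ y, w₂ y = 1) :
    ∑ f : (κ → α) × (κ' → β), (∏ i, w₁ (f.1 i)) * ∏ j, w₂ (f.2 j) = 1 := by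
  simp only [Fintype.sum_prod_type, ← mul_sum, ← Fintype.prod_sum, hw₁, hw₂,
    prod_const_one, mul_one]

lemma one_sub_le_sum_ite {Ω : Type*} [Fintype Ω] {W : Ω → ℝ} (hW : ∑ ω, W ω = 1) {P : Ω → Prop}
    {ε : ℝ} (hP : ∑ ω with ¬ P ω, W ω ≤ ε) : 1 - ε ≤ ∑ ω, if P ω then W ω else 0 := by
  rw [← sum_filter]
  linarith [sum_filter_add_sum_filter_not univ P W]

lemma sgn_mul_sgn_eq_neg_one_iff {x y : Bool} : sgn x * sgn y = -1 ↔ x ≠ y := by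
  cases x <;> cases y <;> norm_num [sgn]

lemma sum_sum_ite_sgn_mul_sgn (η : ℝ) :
    ∑ y : Bool, (if y then η else 1 - η) *
        ∑ x : Bool, (if x then η else 1 - η) * (if sgn x * sgn y = -1 then 1 else 0) =
      2 * η * (1 - η) := by
  simp only [sgn_mul_sgn_eq_neg_one_iff, Fintype.sum_bool]
  norm_num
  ring

end RandomSigns

theorem stmt_4_general {V : Type} {E κ κ' : Type*} [Fintype V] [DecidableEq V] [Nontrivial V]
    [Fintype E] [Fintype κ] [DecidableEq κ] [Fintype κ'] [DecidableEq κ'] {a b : E → V}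
    {D : V → ℝ} (hD : ∀ v, 0 < D v) {dmin : ℝ} (hdmin : IsLeast (Set.range D) dmin) {lam : ℝ}
    (hlam : IsLeast {r : ℝ | ∃ z : V → ℝ, ∑ v, z v * √(D v) = 0 ∧ ∑ v, z v ^ 2 = 1 ∧
      r = z ⬝ᵥ (Matrix.of fun i j =>
        (∑ e, edgeLapV (a e) (b e)) i j / (√(D i) * √(D j))) *ᵥ z} lam)
    {Δ : ℝ} (hΔ : 0 < Δ) {c₁ : E → κ} {c₂ : E → κ'}
    (h₁ : ∀ i v, (#{e | c₁ e = i ∧ (a e = v ∨ b e = v)} : ℝ) ≤ Δ)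
    (h₂ : ∀ j v, (#{e | c₂ e = j ∧ (a e = v ∨ b e = v)} : ℝ) ≤ Δ)
    {η : ℝ} (hη : η ∈ Set.Icc 0 1)
    (hgap : 1728 * Δ * Real.log (Fintype.card V) ≤ dmin * lam)
    {δ : ℝ} (hδ : δ = √(1728 * Δ * Real.log (Fintype.card V) / (dmin * lam))) :
    1 - 1 / (Fintype.card V : ℝ) ^ 2 ≤
      ∑ f : (κ → Bool) × (κ' → Bool),
        if (max ((1 + δ) * (2 * η * (1 - η))) (1 / 3) • (∑ e, edgeLapV (a e) (b e)) -
            ∑ e, (if sgn (f.1 (c₁ e)) * sgn (f.2 (c₂ e)) = -1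
              then edgeLapV (a e) (b e) else 0)).PosSemidef
        then (∏ i, if f.1 i then η else 1 - η) * (∏ j, if f.2 j then η else 1 - η)
        else 0 := by
  have hlog : 0 < Real.log (Fintype.card V) := Real.log_pos (mod_cast Fintype.one_lt_card)
  have hg : 0 < dmin * lam := lt_of_lt_of_le (by positivity) hgap
  have hlam0 : 0 < lam := by
    obtain ⟨v, rfl⟩ := hdmin.1
    exact pos_of_mul_pos_right hg (hD v).le
  have hPoincare : PoincareInequality a b D (dmin * lam) :=
    poincareInequality_of_rayleigh_le hD (fun v => hdmin.2 ⟨v, rfl⟩) hlam0.le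
      fun z hz hz1 => hlam.2 ⟨z, hz, hz1, rfl⟩
  have hδ0 : 0 < δ := hδ ▸ Real.sqrt_pos.2 (by positivity)
  have hδ1 : δ ≤ 1 := hδ ▸ Real.sqrt_le_one.2 ((div_le_one hg).2 hgap)
  have hδ2 : 1728 * Δ * Real.log (Fintype.card V) / (dmin * lam) ≤ δ ^ 2 :=
    (hδ ▸ Real.sq_sqrt (by positivity)).ge
  have hw (x : Bool) : 0 ≤ if x then η else 1 - η := by
    split_ifs <;> linarith [hη.1, hη.2]
  have hw1 : ∑ x : Bool, (if x then η else 1 - η) = 1 := by simp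
  have htail := hPoincare.weightedLap_concentration hg
    (sum_pos (fun v _ => hD v) univ_nonempty).ne' hΔ.le h₁ h₂ hw hw1 hw hw1
    (θ := fun x y => if sgn x * sgn y = -1 then 1 else 0)
    (fun x y => by split_ifs <;> simp) hδ0 hδ1 hδ2
  refine one_sub_le_sum_ite (sum_prod_mul_prod_eq_one hw1 hw1) ?_
  rw [weightedLap_one] at htail
  simpa only [Matrix.le_iff, sum_sum_ite_sgn_mul_sgn, weightedLap_apply, ite_smul, one_smul,
    zero_smul] using htail

theorem stmt_4 : ∃ B C : ℝ, 0 < B ∧ 0 < C ∧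
    ∀ (n : ℕ), 2 ≤ n →
    ∀ (E : Type) [Fintype E] [DecidableEq E],
    ∀ (a b : E → Fin n), (∀ e, a e ≠ b e) →
    ∀ (s : Fin n → ℕ) (D : Fin n → ℕ),
      (∀ v, D v = (Finset.univ.filter fun e : E => a e = v ∨ b e = v).card + s v) →
      (∀ v, 0 < D v) →
    ∀ dmin : ℕ, IsLeast (Set.range D) dmin →
    -- `lam > 0` is the second-smallest eigenvalue of `D^{−1/2} L_G D^{−1/2}`:
    -- the minimum Rayleigh quotient over unit vectors orthogonal to `D^{1/2}·1`,
    -- the eigenvector of the smallest eigenvalue `0`.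
    ∀ lam : ℝ, 0 < lam →
      IsLeast {r : ℝ | ∃ z : Fin n → ℝ,
        (∑ v, z v * Real.sqrt (D v)) = 0 ∧ (∑ v, (z v) ^ 2) = 1 ∧
        r = z ⬝ᵥ ((Matrix.of fun i j =>
            (∑ e : E, edgeLapV (a e) (b e)) i j / (Real.sqrt (D i) * Real.sqrt (D j))) *ᵥ z)} lam →
    ∀ (m₁ m₂ : ℕ) (Δ : ℝ), 1 ≤ Δ →
    ∀ (c₁ : E → Fin m₁) (c₂ : E → Fin m₂),
      Function.Injective (fun e => (c₁ e, c₂ e)) →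
      (∀ (i : Fin m₁) (v : Fin n),
        ((Finset.univ.filter fun e : E => c₁ e = i ∧ (a e = v ∨ b e = v)).card : ℝ) ≤ Δ) →
      (∀ (j : Fin m₂) (v : Fin n),
        ((Finset.univ.filter fun e : E => c₂ e = j ∧ (a e = v ∨ b e = v)).card : ℝ) ≤ Δ) →
    ∀ η : ℝ, η ∈ Set.Ico (0 : ℝ) (1 / 2) →
      B * Δ * Real.log n ≤ (dmin : ℝ) * lam →
    ∀ δ : ℝ, δ = Real.sqrt (B * Δ * Real.log n / ((dmin : ℝ) * lam)) →
      1 - C / (n : ℝ) ^ 2 ≤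
        ∑ f : (Fin m₁ → Bool) × (Fin m₂ → Bool),
          if (max ((1 + δ) * (2 * η * (1 - η))) (1 / 3) • (∑ e : E, edgeLapV (a e) (b e)) -
              ∑ e : E, (if sgn (f.1 (c₁ e)) * sgn (f.2 (c₂ e)) = -1
                        then edgeLapV (a e) (b e) else 0)).PosSemidef
          then (∏ i, if f.1 i then η else 1 - η) * (∏ j, if f.2 j then η else 1 - η)
          else 0 := by
  refine ⟨1728, 1, by norm_num, one_pos, ?_⟩
  intro n hn E _ _ a b _ s D _ hD dmin hdmin lam _ hlam m₁ m₂ Δ hΔ c₁ c₂ _ h₁ h₂ η hη hgap δ hδ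
  have := Fin.nontrivial_iff_two_le.2 hn
  have hdmin' : IsLeast (Set.range fun v => (D v : ℝ)) dmin := by
    simpa only [← Set.range_comp, Function.comp_def] using
      (Nat.mono_cast (α := ℝ)).map_isLeast hdmin
  simpa only [Fintype.card_fin] using stmt_4_general (fun v => Nat.cast_pos.2 (hD v)) hdmin' hlam
    (one_pos.trans_le hΔ) h₁ h₂ ⟨hη.1, by linarith [hη.2]⟩ (by simpa using hgap) (by simpa using hδ)
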